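/- Let R = R₀ ⊕ R₁ be a finite-dimensional complex solvable Lie superalgebra with nilradical N = N₀ ⊕ N₁ satisfying R² ⊆ N, let Q₀ ⊆ R₀ be a complementary subspace to N in R, and let Q₀² = { z ∈ Q₀ : the operator induced by ad z on the quotient N₀/(N₀² + [N₁,N₁]) is nilpotent }. Then dim(Q₀/Q₀²) ≤ dim(N₀/(N₀² + [N₁,N₁])) and dim Q₀² ≤ dim(N₁/[N₁,N₀]). -/

import Mathlib

/-!
The complement `Q` acts on `V₀ = N₀ / (N₀² + [N₁,N₁])` and on `V₁ = N₁ / [N₁,N₀]` through `ad`.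
Since `R² ⊆ N`, the commutator of `ad z` and `ad w` is bracketing with the element `[z,w]` of
`N₀`, which is zero on both quotients, so each action is by commuting operators. A linear family
of commuting operators on `V` has at most `dim V` weights; these are linear functionals, and an
operator on which all of them vanish is nilpotent. Hence the elements acting nilpotently contain
a subspace of codimension at most `dim V` (`finrank_quotient_le_of_commute`,
`finrank_quotient_le_subquotient`). On `V₀` this is the first bound.

For the second bound it remains to see that only `z = 0` in `Q₀²` acts nilpotently on `V₁`. Such a
`z` acts nilpotently on `N / N²`, so the generalized `0`-eigenspace `B` of `ad z` satisfies
`N ⊆ B + N²` (Fitting decomposition). As `ad z` is a derivation, `B` is closed under the bracket,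
and as `N` is nilpotent it is generated modulo `N²`; therefore `N ⊆ B` (`le_zeroSpace`), and
`ad z` is nilpotent on all of `R` because it maps `R` into `N` (`ad_isNilpotent`). Then
`N + ℂz` is a nilpotent graded ideal (`lcsIn_sup_span_eq_bot`), so `z ∈ N ∩ Q = 0`.
-/

open Submodule Module

/-- A Lie superalgebra structure over `ℂ` on the module `L`: a ℤ₂-grading
`L = even ⊕ odd`, together with a grading-preserving bilinear bracket which is
super skew-symmetric and satisfies the super Jacobi identity on homogeneous
elements. -/
structure SuperAlg (L : Type) [AddCommGroup L] [Module ℂ L] : Type where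
  bracket : L →ₗ[ℂ] L →ₗ[ℂ] L
  even : Submodule ℂ L
  odd : Submodule ℂ L
  grading_sup : even ⊔ odd = ⊤
  grading_inf : even ⊓ odd = ⊥
  bk_ee : ∀ x ∈ even, ∀ y ∈ even, bracket x y ∈ even
  bk_eo : ∀ x ∈ even, ∀ y ∈ odd, bracket x y ∈ odd
  bk_oe : ∀ x ∈ odd, ∀ y ∈ even, bracket x y ∈ odd
  bk_oo : ∀ x ∈ odd, ∀ y ∈ odd, bracket x y ∈ even
  skew_e : ∀ x y : L, (x ∈ even ∨ y ∈ even) → bracket x y = - bracket y x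
  skew_oo : ∀ x ∈ odd, ∀ y ∈ odd, bracket x y = bracket y x
  jacobi : ∀ (dx dy dz : Bool) (x y z : L),
      x ∈ (if dx then odd else even) → y ∈ (if dy then odd else even) →
      z ∈ (if dz then odd else even) →
      (if dx && dz then (-1 : ℂ) else 1) • bracket x (bracket y z) +
      (if dx && dy then (-1 : ℂ) else 1) • bracket y (bracket z x) +
      (if dy && dz then (-1 : ℂ) else 1) • bracket z (bracket x y) = 0

namespace SuperAlg

variable {L : Type} [AddCommGroup L] [Module ℂ L] (S : SuperAlg L)

/-- The subspace `[A, B]` spanned by brackets of elements of `A` and `B`. -/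
def bk (A B : Submodule ℂ L) : Submodule ℂ L := Submodule.map₂ S.bracket A B

/-- The descending central series of a subalgebra `A`:
`C¹(A) = A`, `C^{k+1}(A) = [C^k(A), A]`. -/
def lcsIn (A : Submodule ℂ L) : ℕ → Submodule ℂ L
  | 0 => A
  | k + 1 => S.bk (lcsIn A k) A

/-- The derived series of a subalgebra `A`:
`A^{[1]} = A`, `A^{[k+1]} = [A^{[k]}, A^{[k]}]`. -/
def dsIn (A : Submodule ℂ L) : ℕ → Submodule ℂ L
  | 0 => A
  | k + 1 => S.bk (dsIn A k) (dsIn A k)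

/-- The square `L² = [L, L]`. -/
def sq : Submodule ℂ L := S.bk ⊤ ⊤

/-- Nilpotency: the descending central series vanishes eventually. -/
def IsNilpotent : Prop := ∃ s, S.lcsIn ⊤ s = ⊥

/-- Solvability: the derived series vanishes eventually. -/
def IsSolvable : Prop := ∃ k, S.dsIn ⊤ k = ⊥

/-- `A` is an ideal. -/
def IsIdeal (A : Submodule ℂ L) : Prop := S.bk A ⊤ ≤ A

/-- `A` is a graded subspace. -/
def IsGraded (A : Submodule ℂ L) : Prop := (A ⊓ S.even) ⊔ (A ⊓ S.odd) = A

/-- `N` is the nilradical: the greatest nilpotent graded ideal. -/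
def IsNilradical (N : Submodule ℂ L) : Prop :=
  (S.IsGraded N ∧ S.IsIdeal N ∧ ∃ s, S.lcsIn N s = ⊥) ∧
  ∀ A : Submodule ℂ L, S.IsGraded A → S.IsIdeal A → (∃ s, S.lcsIn A s = ⊥) → A ≤ N

/-- `R` is the radical: the greatest solvable graded ideal. -/
def IsRadical (R : Submodule ℂ L) : Prop :=
  (S.IsGraded R ∧ S.IsIdeal R ∧ ∃ k, S.dsIn R k = ⊥) ∧
  ∀ A : Submodule ℂ L, S.IsGraded A → S.IsIdeal A → (∃ k, S.dsIn A k = ⊥) → A ≤ R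

/-- `d` is an even superderivation. -/
def IsEvenDer (d : L →ₗ[ℂ] L) : Prop :=
  (∀ x ∈ S.even, d x ∈ S.even) ∧ (∀ x ∈ S.odd, d x ∈ S.odd) ∧
  ∀ x y : L, d (S.bracket x y) = S.bracket (d x) y + S.bracket x (d y)

/-- `d` is an odd superderivation. -/
def IsOddDer (d : L →ₗ[ℂ] L) : Prop :=
  (∀ x ∈ S.even, d x ∈ S.odd) ∧ (∀ x ∈ S.odd, d x ∈ S.even) ∧
  (∀ x ∈ S.even, ∀ y : L, d (S.bracket x y) = S.bracket (d x) y + S.bracket x (d y)) ∧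
  (∀ x ∈ S.odd, ∀ y : L, d (S.bracket x y) = S.bracket (d x) y - S.bracket x (d y))

/-- The inner superderivation `ad a : y ↦ [y, a]`. -/
def ad (a : L) : L →ₗ[ℂ] L := S.bracket.flip a

/-- An endomorphism is diagonalizable if its eigenspaces span. -/
def IsDiagonalizable (f : Module.End ℂ L) : Prop :=
  (⨆ μ : ℂ, Module.End.eigenspace f μ) = ⊤

/-- A torus on `S`: a commutative subalgebra of the even superderivations
consisting of diagonalizable endomorphisms. -/
def IsTorus (T : Submodule ℂ (L →ₗ[ℂ] L)) : Prop :=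
  (∀ d ∈ T, S.IsEvenDer d) ∧
  (∀ d ∈ T, ∀ d' ∈ T, d ∘ₗ d' = d' ∘ₗ d) ∧
  (∀ d ∈ T, IsDiagonalizable d)

/-- A maximal torus. -/
def IsMaxTorus (T : Submodule ℂ (L →ₗ[ℂ] L)) : Prop :=
  S.IsTorus T ∧ ∀ T' : Submodule ℂ (L →ₗ[ℂ] L), S.IsTorus T' → T ≤ T' → T' = T

/-- A nilpotent Lie superalgebra is of maximal rank if a maximal torus has
dimension `dim (L / L²)`. -/
def IsMaxRank : Prop :=
  ∃ T : Submodule ℂ (L →ₗ[ℂ] L), S.IsMaxTorus T ∧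
    Module.finrank ℂ ↥T = Module.finrank ℂ (L ⧸ S.sq)

/-- `ι : N → L` is an embedding of Lie superalgebras (injective, bracket- and
grading-preserving). -/
def IsEmbedding {N : Type} [AddCommGroup N] [Module ℂ N]
    (SN : SuperAlg N) (ι : N →ₗ[ℂ] L) : Prop :=
  Function.Injective ι ∧
  (∀ x y : N, ι (SN.bracket x y) = S.bracket (ι x) (ι y)) ∧
  SN.even.map ι = S.even ⊓ LinearMap.range ι ∧
  SN.odd.map ι = S.odd ⊓ LinearMap.range ι

/-- `S` (on `L`) is a maximal solvable extension of the nilpotent Lie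
superalgebra `SN` (on `N`, embedded via `ι` as the nilradical): `S` is solvable
with nilradical `ι(N)`, and among all such solvable extensions the codimension
of the nilradical is maximal. -/
def IsMaxSolvExt {N : Type} [AddCommGroup N] [Module ℂ N]
    (SN : SuperAlg N) (ι : N →ₗ[ℂ] L) : Prop :=
  S.IsSolvable ∧ S.IsEmbedding SN ι ∧ S.IsNilradical (LinearMap.range ι) ∧
  ∀ (L' : Type) [AddCommGroup L'] [Module ℂ L'] [FiniteDimensional ℂ L']
    (S' : SuperAlg L') (ι' : N →ₗ[ℂ] L'),
      S'.IsSolvable → S'.IsEmbedding SN ι' → S'.IsNilradical (LinearMap.range ι') →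
      Module.finrank ℂ (L' ⧸ LinearMap.range ι') ≤
        Module.finrank ℂ (L ⧸ LinearMap.range ι)

/-- `S` (on `L`) is isomorphic to the semidirect product `R_T = N ⊕ T` of the
nilpotent Lie superalgebra `SN` (embedded via `ι` as the nilradical) with a
torus `T` of `SN`, the bracket being given by `[x, d] = d x`, `[d, d'] = 0`:
there is an even complement `Q` to `ι(N)` with `[Q, Q] = 0` such that
restriction of the adjoint action to `N` is a linear isomorphism of `Q` onto
`T`. -/
def IsRT {N : Type} [AddCommGroup N] [Module ℂ N]
    (_SN : SuperAlg N) (ι : N →ₗ[ℂ] L) (T : Submodule ℂ (N →ₗ[ℂ] N)) : Prop :=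
  ∃ (Q : Submodule ℂ L) (f : ↥Q →ₗ[ℂ] (N →ₗ[ℂ] N)),
    Q ≤ S.even ∧ Q ⊓ LinearMap.range ι = ⊥ ∧ Q ⊔ LinearMap.range ι = ⊤ ∧
    S.bk Q Q = ⊥ ∧
    (∀ (z : ↥Q) (n : N), ι (f z n) = S.bracket (ι n) (z : L)) ∧
    Function.Injective f ∧
    LinearMap.range f = T

end SuperAlg
/-! ### Commuting families of operators -/

/-- In a linear family of commuting operators on `V`, any subspace containing all members that act
nilpotently has codimension at most `dim V`: the joint weights are at most `dim V` linear
functionals, whose common kernel acts nilpotently. -/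
theorem finrank_quotient_le_of_commute {E V : Type} [AddCommGroup E] [Module ℂ E]
    [AddCommGroup V] [Module ℂ V] [FiniteDimensional ℂ V] [FiniteDimensional ℂ E]
    (f : E →ₗ[ℂ] Module.End ℂ V) (hf : ∀ z w, Commute (f z) (f w))
    (K : Submodule ℂ E) (hK : ∀ z, IsNilpotent (f z) → z ∈ K) :
    finrank ℂ (E ⧸ K) ≤ finrank ℂ V := by
  let W : (E → ℂ) → Submodule ℂ V := fun χ => ⨅ z, (f z).maxGenEigenspace (χ z)
  have hind : iSupIndep W :=
    Module.End.independent_iInf_maxGenEigenspace_of_forall_mapsTo (fun z => f z)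
      (fun i j φ => Module.End.mapsTo_maxGenEigenspace_of_comm (hf j i) φ)
  have htop : ⨆ χ, W χ = ⊤ :=
    Module.End.iSup_iInf_maxGenEigenspace_eq_top_of_iSup_maxGenEigenspace_eq_top_of_commute
      (fun z => f z) (fun i j _ => hf i j)
      (fun z => Module.End.iSup_maxGenEigenspace_eq_top (f z))
  let _ : Fintype {χ // W χ ≠ ⊥} := hind.fintypeNeBotOfFiniteDimensional
  let φ : E →ₗ[ℂ] ({χ // W χ ≠ ⊥} → ℂ) := LinearMap.pi fun χ =>
    { toFun := χ.1
      map_add' := Module.End.map_add_of_iInf_genEigenspace_ne_bot_of_commute f χ.1 ⊤ χ.2 hf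
      map_smul' := Module.End.map_smul_of_iInf_genEigenspace_ne_bot f χ.1 ⊤ χ.2 }
  have hker : LinearMap.ker φ ≤ K := by
    intro z hz
    apply hK
    have h0 : ∀ χ : {χ // W χ ≠ ⊥}, χ.1 z = 0 := fun χ => congrFun (LinearMap.mem_ker.1 hz) χ
    have h1 : (f z).maxGenEigenspace 0 = ⊤ := by
      rw [eq_top_iff, ← htop]
      refine iSup_le fun χ => ?_
      by_cases hχ : W χ = ⊥
      · simp [hχ]
      · exact (iInf_le _ z).trans (le_of_eq (by rw [show χ z = 0 from h0 ⟨χ, hχ⟩]))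
    rw [Module.End.maxGenEigenspace_eq_genEigenspace_finrank] at h1
    refine ⟨finrank ℂ V, LinearMap.ext fun x => ?_⟩
    have : x ∈ (f z).genEigenspace 0 (finrank ℂ V) := h1 ▸ Submodule.mem_top
    simpa [Module.End.mem_genEigenspace_nat] using this
  calc finrank ℂ (E ⧸ K) ≤ finrank ℂ (E ⧸ LinearMap.ker φ) :=
        LinearMap.finrank_le_finrank_of_surjective (f := Submodule.factor hker)
          (Submodule.factor_surjective hker)
    _ = finrank ℂ (LinearMap.range φ) := φ.quotKerEquivRange.finrank_eq
    _ ≤ finrank ℂ ({χ // W χ ≠ ⊥} → ℂ) := Submodule.finrank_le _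
    _ = Fintype.card {χ // W χ ≠ ⊥} := by simp
    _ ≤ finrank ℂ V := hind.subtype_ne_bot_le_finrank

/-- `finrank_quotient_le_of_commute` for a family acting on `U / (U ∩ P)` with `U` and `P`
invariant, and commuting modulo `P`. -/
theorem finrank_quotient_le_subquotient {E L : Type} [AddCommGroup E] [Module ℂ E]
    [AddCommGroup L] [Module ℂ L] [FiniteDimensional ℂ L] [FiniteDimensional ℂ E]
    (T : E →ₗ[ℂ] Module.End ℂ L) (U P : Submodule ℂ L)
    (hU : ∀ z, ∀ x ∈ U, T z x ∈ U) (hP : ∀ z, ∀ x ∈ P, T z x ∈ P)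
    (hc : ∀ z w, ∀ x ∈ U, T z (T w x) - T w (T z x) ∈ P)
    (K : Submodule ℂ E) (hK : ∀ z, (∃ k : ℕ, ∀ x ∈ U, ((T z) ^ k) x ∈ P) → z ∈ K) :
    finrank ℂ (E ⧸ K) ≤ finrank ℂ (↥U ⧸ Submodule.comap U.subtype P) := by
  let f : E →ₗ[ℂ] Module.End ℂ (↥U ⧸ Submodule.comap U.subtype P) :=
    { toFun := fun z => Submodule.mapQ _ _ ((T z).restrict (hU z)) fun x hx => hP z x hx
      map_add' := fun z w => by
        refine Submodule.linearMap_qext _ (LinearMap.ext fun x => ?_)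
        exact congrArg Submodule.Quotient.mk (Subtype.ext (by simp))
      map_smul' := fun c z => by
        refine Submodule.linearMap_qext _ (LinearMap.ext fun x => ?_)
        exact congrArg Submodule.Quotient.mk (Subtype.ext (by simp)) }
  have hfx : ∀ z (x : U), f z (Submodule.Quotient.mk x) =
      Submodule.Quotient.mk ⟨T z x, hU z x x.2⟩ := fun z x => rfl
  refine finrank_quotient_le_of_commute f (fun z w => ?_) K fun z hz => hK z ?_
  · refine Submodule.linearMap_qext _ (LinearMap.ext fun x => ?_)
    simp only [LinearMap.comp_apply, Submodule.mkQ_apply, Module.End.mul_apply, hfx]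
    exact (Submodule.Quotient.eq _).2 (hc z w x x.2)
  · obtain ⟨k, hk⟩ := hz
    have hpow : ∀ n (x : U), ∃ h : ((T z) ^ n) x ∈ U, ((f z) ^ n) (Submodule.Quotient.mk x) =
        Submodule.Quotient.mk ⟨((T z) ^ n) x, h⟩ := by
      intro n x
      induction n with
      | zero => exact ⟨x.2, rfl⟩
      | succ n ih =>
        obtain ⟨h, e⟩ := ih
        have h' : ((T z) ^ (n + 1)) x ∈ U := by
          rw [pow_succ', Module.End.mul_apply]; exact hU z _ h
        refine ⟨h', ?_⟩
        rw [pow_succ', Module.End.mul_apply, e, hfx]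
        congr 2
        rw [pow_succ', Module.End.mul_apply]
    refine ⟨k, fun x hx => ?_⟩
    obtain ⟨h, e⟩ := hpow k ⟨x, hx⟩
    rw [hk, LinearMap.zero_apply] at e
    exact (Submodule.Quotient.mk_eq_zero (Submodule.comap U.subtype P)).1 e.symm

namespace SuperAlg

variable {L : Type} [AddCommGroup L] [Module ℂ L] (S : SuperAlg L)

/-! ### Brackets of graded subspaces -/

theorem bracket_mem_bk {A B : Submodule ℂ L} {x y : L} (hx : x ∈ A) (hy : y ∈ B) :
    S.bracket x y ∈ S.bk A B := Submodule.apply_mem_map₂ _ hx hy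

theorem bk_le {A B C : Submodule ℂ L} :
    S.bk A B ≤ C ↔ ∀ x ∈ A, ∀ y ∈ B, S.bracket x y ∈ C := Submodule.map₂_le

theorem bk_mono {A A' B B' : Submodule ℂ L} (hA : A ≤ A') (hB : B ≤ B') :
    S.bk A B ≤ S.bk A' B' := Submodule.map₂_le_map₂ hA hB

theorem IsGraded.exists_add {S : SuperAlg L} {A : Submodule ℂ L} (hA : S.IsGraded A) {x : L}
    (hx : x ∈ A) : ∃ a ∈ A ⊓ S.even, ∃ b ∈ A ⊓ S.odd, a + b = x := by
  rw [← hA] at hx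
  exact Submodule.mem_sup.1 hx

theorem IsGraded.bk {S : SuperAlg L} {A B : Submodule ℂ L} (hA : S.IsGraded A)
    (hB : S.IsGraded B) : S.IsGraded (S.bk A B) := by
  refine le_antisymm (sup_le inf_le_left inf_le_left) (S.bk_le.2 fun x hx y hy => ?_)
  obtain ⟨a, ha, b, hb, rfl⟩ := hA.exists_add hx
  obtain ⟨c, hc, d, hd, rfl⟩ := hB.exists_add hy
  simp only [map_add, LinearMap.add_apply]
  refine add_mem (add_mem ?_ ?_) (add_mem ?_ ?_)
  · exact Submodule.mem_sup_left ⟨S.bracket_mem_bk ha.1 hc.1, S.bk_ee _ ha.2 _ hc.2⟩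
  · exact Submodule.mem_sup_right ⟨S.bracket_mem_bk hb.1 hc.1, S.bk_oe _ hb.2 _ hc.2⟩
  · exact Submodule.mem_sup_right ⟨S.bracket_mem_bk ha.1 hd.1, S.bk_eo _ ha.2 _ hd.2⟩
  · exact Submodule.mem_sup_left ⟨S.bracket_mem_bk hb.1 hd.1, S.bk_oo _ hb.2 _ hd.2⟩

theorem IsGraded.bk_comm_le {S : SuperAlg L} {A B : Submodule ℂ L} (hA : S.IsGraded A)
    (hB : S.IsGraded B) : S.bk A B ≤ S.bk B A := by
  refine S.bk_le.2 fun x hx y hy => ?_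
  obtain ⟨a, ha, b, hb, rfl⟩ := hA.exists_add hx
  obtain ⟨c, hc, d, hd, rfl⟩ := hB.exists_add hy
  simp only [map_add, LinearMap.add_apply]
  rw [S.skew_e a c (.inl ha.2), S.skew_e a d (.inl ha.2), S.skew_e b c (.inr hc.2),
    S.skew_oo b hb.2 d hd.2]
  exact add_mem (add_mem (neg_mem (S.bracket_mem_bk hc.1 ha.1))
    (neg_mem (S.bracket_mem_bk hc.1 hb.1))) (add_mem (neg_mem (S.bracket_mem_bk hd.1 ha.1))
    (S.bracket_mem_bk hd.1 hb.1))

theorem IsGraded.lcsIn {S : SuperAlg L} {A : Submodule ℂ L} (hA : S.IsGraded A) (k : ℕ) :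
    S.IsGraded (S.lcsIn A k) := by
  induction k with
  | zero => exact hA
  | succ k ih => exact ih.bk hA

/-- Bracketing on the left with `A` also lowers the central series of a graded `A`. -/
theorem IsGraded.bk_lcsIn_le {S : SuperAlg L} {A : Submodule ℂ L} (hA : S.IsGraded A) (k : ℕ) :
    S.bk A (S.lcsIn A k) ≤ S.lcsIn A (k + 1) := hA.bk_comm_le (hA.lcsIn k)

theorem lcsIn_succ_le {A : Submodule ℂ L} (hA : S.bk A A ≤ A) (k : ℕ) :
    S.lcsIn A (k + 1) ≤ S.lcsIn A k := by
  induction k with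
  | zero => exact hA
  | succ k ih => exact S.bk_mono ih le_rfl

/-! ### Even inner derivations -/

@[simp] theorem ad_apply (z x : L) : S.ad z x = S.bracket x z := rfl

/-- For even `z` the operator `ad z` is a derivation, without signs. -/
theorem ad_bracket {z : L} (hz : z ∈ S.even) (x y : L) :
    S.ad z (S.bracket x y) = S.bracket (S.ad z x) y + S.bracket x (S.ad z y) := by
  have hdec : ∀ x : L, ∃ a ∈ S.even, ∃ b ∈ S.odd, a + b = x := fun x =>
    Submodule.mem_sup.1 (S.grading_sup ▸ Submodule.mem_top)
  have key : ∀ dx dy : Bool, ∀ x y : L, x ∈ (if dx then S.odd else S.even) →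
      y ∈ (if dy then S.odd else S.even) → S.bracket (S.bracket x y) z =
        S.bracket (S.bracket x z) y + S.bracket x (S.bracket y z) := by
    intro dx dy x y hx hy
    have h := S.jacobi dx dy false x y z hx hy (by simpa using hz)
    rw [S.skew_e z x (.inl hz), S.skew_e z _ (.inl hz)] at h
    have hs : S.bracket y (S.bracket x z) =
        -((if dx && dy then (-1 : ℂ) else 1) • S.bracket (S.bracket x z) y) := by
      cases dx <;> cases dy <;> simp only [Bool.false_eq_true, if_true, if_false] at hx hy
      · simpa using S.skew_e y _ (.inr (S.bk_ee _ hx _ hz))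
      · simpa using S.skew_e y _ (.inr (S.bk_ee _ hx _ hz))
      · simpa using S.skew_e y _ (.inl hy)
      · simpa using S.skew_oo y hy _ (S.bk_oe _ hx _ hz)
    rw [map_neg, hs] at h
    have e : S.bracket x (S.bracket y z) + S.bracket (S.bracket x z) y
        - S.bracket (S.bracket x y) z = 0 := by
      rw [← h]
      cases dx <;> cases dy <;> simp <;> abel
    rw [← sub_eq_zero, ← neg_eq_zero, ← e]
    abel
  obtain ⟨a, ha, b, hb, rfl⟩ := hdec x
  obtain ⟨c, hc, d, hd, rfl⟩ := hdec y
  have h1 := key false false a c (by simpa) (by simpa)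
  have h2 := key false true a d (by simpa) (by simpa)
  have h3 := key true false b c (by simpa) (by simpa)
  have h4 := key true true b d (by simpa) (by simpa)
  simp only [ad_apply, map_add, LinearMap.add_apply, h1, h2, h3, h4]
  abel

theorem ad_mem_bk {z : L} (hz : z ∈ S.even) {A B : Submodule ℂ L}
    (hA : ∀ x ∈ A, S.ad z x ∈ A) (hB : ∀ x ∈ B, S.ad z x ∈ B) :
    ∀ x ∈ S.bk A B, S.ad z x ∈ S.bk A B := by
  suffices S.bk A B ≤ (S.bk A B).comap (S.ad z) from this
  refine S.bk_le.2 fun x hx y hy => ?_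
  rw [Submodule.mem_comap, S.ad_bracket hz]
  exact add_mem (S.bracket_mem_bk (hA x hx) hy) (S.bracket_mem_bk hx (hB y hy))

theorem ad_mem_sup {z : L} {A B : Submodule ℂ L}
    (hA : ∀ x ∈ A, S.ad z x ∈ A) (hB : ∀ x ∈ B, S.ad z x ∈ B) :
    ∀ x ∈ A ⊔ B, S.ad z x ∈ A ⊔ B := by
  suffices A ⊔ B ≤ (A ⊔ B).comap (S.ad z) from this
  exact sup_le (fun x hx => Submodule.mem_sup_left (hA x hx))
    (fun x hx => Submodule.mem_sup_right (hB x hx))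

theorem ad_mem_lcsIn {z : L} (hz : z ∈ S.even) {A : Submodule ℂ L}
    (hA : ∀ x ∈ A, S.ad z x ∈ A) (k : ℕ) : ∀ x ∈ S.lcsIn A k, S.ad z x ∈ S.lcsIn A k := by
  induction k with
  | zero => exact hA
  | succ k ih => exact S.ad_mem_bk hz ih hA

theorem ad_commutator {z w : L} (hz : z ∈ S.even) (x : L) :
    S.ad z (S.ad w x) - S.ad w (S.ad z x) = S.bracket x (S.bracket w z) := by
  rw [ad_apply S w x, S.ad_bracket hz]
  simp

/-- Elements killed by a power of `ad z` are closed under the bracket. -/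
theorem ad_pow_bracket_eq_zero {z : L} (hz : z ∈ S.even) (n : ℕ) :
    ∀ (i j : ℕ) (x y : L), i + j = n → ((S.ad z) ^ i) x = 0 → ((S.ad z) ^ j) y = 0 →
      ((S.ad z) ^ n) (S.bracket x y) = 0 := by
  induction n with
  | zero =>
    intro i j x y hij hx hy
    obtain rfl : i = 0 := by omega
    have : x = 0 := by simpa using hx
    simp [this]
  | succ n ih =>
    intro i j x y hij hx hy
    rcases i with _ | i
    · have : x = 0 := by simpa using hx
      simp [this]
    rcases j with _ | j
    · have : y = 0 := by simpa using hy
      simp [this]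
    rw [pow_succ, Module.End.mul_apply, S.ad_bracket hz, map_add]
    rw [ih i (j + 1) (S.ad z x) y (by omega) (by rwa [pow_succ, Module.End.mul_apply] at hx) hy,
      ih (i + 1) j x (S.ad z y) (by omega) hx (by rwa [pow_succ, Module.End.mul_apply] at hy),
      add_zero]

/-! ### Nilpotency of `ad z` and of `N + ℂz` -/

/-- If the even derivation `ad z` is nilpotent on `N / [N,N]`, with `N` graded and nilpotent, then
`N` lies in its generalized `0`-eigenspace. -/
theorem le_zeroSpace [FiniteDimensional ℂ L] {z : L} (hz : z ∈ S.even) {N : Submodule ℂ L}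
    (hgr : S.IsGraded N) (hNN : S.bk N N ≤ N) {s : ℕ} (hs : S.lcsIn N s = ⊥)
    (hD : ∀ x ∈ N, S.ad z x ∈ N) {k : ℕ} (hk : ∀ x ∈ N, ((S.ad z) ^ k) x ∈ S.bk N N) :
    N ≤ Module.End.maxGenEigenspace (S.ad z) 0 := by
  set B := Module.End.maxGenEigenspace (S.ad z) 0 with hB
  have memB : ∀ x, x ∈ B ↔ ∃ n : ℕ, ((S.ad z) ^ n) x = 0 := fun x => by
    simp [hB, Module.End.mem_maxGenEigenspace]
  have hBB : ∀ x ∈ B, ∀ y ∈ B, S.bracket x y ∈ B := by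
    intro x hx y hy
    obtain ⟨i, hi⟩ := (memB x).1 hx
    obtain ⟨j, hj⟩ := (memB y).1 hy
    exact (memB _).2 ⟨i + j, S.ad_pow_bracket_eq_zero hz _ i j x y rfl hi hj⟩
  let D : Module.End ℂ N := (S.ad z).restrict hD
  have hDpow : ∀ (n : ℕ) (x : N), ((D ^ n) x : L) = ((S.ad z) ^ n) (x : L) := by
    intro n x
    rw [Module.End.pow_restrict]
    rfl
  -- Fitting decomposition of `N`: `ker Dⁿ ≤ B`, and `range Dⁿ ≤ [N,N]` once `n ≥ k`.
  have h1 : N ≤ B ⊔ S.bk N N := by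
    intro x hx
    obtain ⟨n, hn, hkn⟩ := (D.eventually_isCompl_ker_pow_range_pow.and
      (Filter.eventually_ge_atTop k)).exists
    have hxt : (⟨x, hx⟩ : N) ∈ LinearMap.ker (D ^ n) ⊔ LinearMap.range (D ^ n) :=
      hn.sup_eq_top ▸ Submodule.mem_top
    obtain ⟨a, ha, b, ⟨c, rfl⟩, hab⟩ := Submodule.mem_sup.1 hxt
    refine Submodule.mem_sup.2 ⟨a, (memB _).2 ⟨n, ?_⟩, ((D ^ n) c : N), ?_,
      congrArg Subtype.val hab⟩
    · rw [← hDpow, LinearMap.mem_ker.1 ha]; rfl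
    · obtain ⟨m, rfl⟩ := Nat.exists_eq_add_of_le hkn
      rw [pow_add, Module.End.mul_apply, hDpow]
      exact hk _ (SetLike.coe_mem _)
  have h2 : ∀ j, N ≤ B ⊔ S.lcsIn N j := by
    intro j
    induction j with
    | zero => exact le_sup_right
    | succ j ih =>
      refine h1.trans (sup_le le_sup_left (S.bk_le.2 fun x hx y hy => ?_))
      obtain ⟨a, ha, b, hb, rfl⟩ := Submodule.mem_sup.1 (ih hx)
      obtain ⟨c, hc, d, hd, rfl⟩ := Submodule.mem_sup.1 (ih hy)
      -- Every bracket other than `[a, c]` pairs a factor in `lcsIn N j` with one in `N`.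
      have e : S.bracket (a + b) (c + d) = S.bracket a c + (S.bracket (a + b) d
          + S.bracket b (c + d - d)) := by
        simp only [map_add, LinearMap.add_apply, add_sub_cancel_right]; abel
      rw [e]
      refine Submodule.add_mem_sup (hBB _ ha _ hc) (add_mem ?_ ?_)
      · exact hgr.bk_lcsIn_le j (S.bracket_mem_bk hx hd)
      · exact S.bracket_mem_bk hb (sub_mem hy (antitone_nat_of_succ_le
          (S.lcsIn_succ_le hNN) (Nat.zero_le j) hd))
  simpa [hs] using h2 s

/-- An even `ad z` that maps `L` into `N` and is nilpotent on `N / [N,N]` is nilpotent on `L`. -/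
theorem ad_isNilpotent [FiniteDimensional ℂ L] {z : L} (hz : z ∈ S.even) {N : Submodule ℂ L}
    (hgr : S.IsGraded N) (hNN : S.bk N N ≤ N) {s : ℕ} (hs : S.lcsIn N s = ⊥)
    (hDN : ∀ x, S.ad z x ∈ N)
    {k : ℕ} (hk : ∀ x ∈ N, ((S.ad z) ^ k) x ∈ S.bk N N) :
    _root_.IsNilpotent (R := Module.End ℂ L) (S.ad z) := by
  have hle := S.le_zeroSpace hz hgr hNN hs (fun x _ => hDN x) hk
  have htop : Module.End.maxGenEigenspace (S.ad z) 0 = ⊤ := by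
    refine eq_top_iff.2 fun x _ => ?_
    obtain ⟨n, hn⟩ := (Module.End.mem_maxGenEigenspace _ _ _).1 (hle (hDN x))
    exact (Module.End.mem_maxGenEigenspace _ _ _).2 ⟨n + 1, by simpa [pow_succ] using hn⟩
  rw [Module.End.maxGenEigenspace_eq_genEigenspace_finrank] at htop
  refine ⟨finrank ℂ L, LinearMap.ext fun x => ?_⟩
  have : x ∈ Module.End.genEigenspace (S.ad z) 0 (finrank ℂ L) := htop ▸ Submodule.mem_top
  simpa [Module.End.mem_genEigenspace_nat] using this

/-- If `ad z` is nilpotent and `N` is a nilpotent ideal containing `R²`, then `N + ℂz` is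
nilpotent: a term of its central series that lies in `lcsIn N j` is followed, `n` steps later, by one
that lies in `lcsIn N (j + 1)`, where `(ad z)ⁿ = 0`: modulo `lcsIn N (j + 1)` only `ad z` acts. -/
theorem lcsIn_sup_span_eq_bot {z : L} (hz : z ∈ S.even) {N : Submodule ℂ L}
    (hsq : S.sq ≤ N) {s : ℕ} (hs : S.lcsIn N s = ⊥)
    (hnil : _root_.IsNilpotent (R := Module.End ℂ L) (S.ad z)) :
    ∃ t, S.lcsIn (N ⊔ Submodule.span ℂ {z}) t = ⊥ := by
  obtain ⟨n, hn⟩ := hnil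
  set A := N ⊔ Submodule.span ℂ {z} with hA
  have hbr : ∀ x y, S.bracket x y ∈ N := fun x y =>
    hsq (S.bracket_mem_bk Submodule.mem_top Submodule.mem_top)
  have hanti := S.lcsIn_succ_le (A := N) (S.bk_le.2 fun x _ y _ => hbr x y)
  have hDC := S.ad_mem_lcsIn hz (A := N) (fun x _ => hbr x z)
  have hDC' : ∀ j i, ∀ x ∈ S.lcsIn N j, ((S.ad z) ^ i) x ∈ S.lcsIn N j := by
    intro j i
    induction i with
    | zero => exact fun x hx => hx
    | succ i ih =>
      intro x hx
      rw [pow_succ', Module.End.mul_apply]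
      exact hDC j _ (ih x hx)
  have hstep : ∀ j, ∃ t, S.lcsIn A t ≤ S.lcsIn N j := by
    intro j
    induction j with
    | zero => exact ⟨1, S.bk_le.2 fun x _ y _ => hbr x y⟩
    | succ j ih =>
      obtain ⟨t, ht⟩ := ih
      -- At `i = n` the first summand vanishes.
      have hi : ∀ i, S.lcsIn A (t + i) ≤
          (S.lcsIn N j).map ((S.ad z) ^ i) ⊔ S.lcsIn N (j + 1) := by
        intro i
        induction i with
        | zero =>
          refine ht.trans (le_trans ?_ le_sup_left)
          intro x hx
          exact ⟨x, hx, rfl⟩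
        | succ i ih =>
          refine S.bk_le.2 fun x hx y hy => ?_
          obtain ⟨a, ⟨u, hu, rfl⟩, b, hb, rfl⟩ := Submodule.mem_sup.1 (ih hx)
          obtain ⟨p, hp, q, hq, rfl⟩ := Submodule.mem_sup.1 hy
          obtain ⟨c, rfl⟩ := Submodule.mem_span_singleton.1 hq
          have hab : ((S.ad z) ^ i) u + b ∈ S.lcsIn N j :=
            add_mem (hDC' j i u hu) (hanti j hb)
          have e : S.bracket (((S.ad z) ^ i) u + b) (p + c • z) =
              ((S.ad z) ^ (i + 1)) (c • u) +
              (S.bracket (((S.ad z) ^ i) u + b) p + c • S.ad z b) := by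
            rw [pow_succ', Module.End.mul_apply]
            simp only [map_add, map_smul, LinearMap.add_apply, ad_apply]
            module
          rw [e]
          exact Submodule.add_mem_sup ⟨c • u, Submodule.smul_mem _ _ hu, rfl⟩
            (add_mem (S.bracket_mem_bk hab hp) (Submodule.smul_mem _ _ (hDC _ b hb)))
      refine ⟨t + n, (hi n).trans (sup_le ?_ le_rfl)⟩
      rw [hn]
      rintro _ ⟨u, _, rfl⟩
      simp
  obtain ⟨t, ht⟩ := hstep s
  exact ⟨t, le_bot_iff.1 (hs ▸ ht)⟩

end SuperAlg

/-! ### The dimension bounds -/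

/-- Let `R = R₀ ⊕ R₁` be a finite-dimensional complex solvable Lie
superalgebra with nilradical `N = N₀ ⊕ N₁`, `R² ⊆ N`, `Q₀ ⊆ R₀` a complement to `N`, and
`Q₀²` the subspace of those `z ∈ Q₀` whose induced operator on `N₀/(N₀² + [N₁,N₁])` is
nilpotent. Then `dim (Q₀/Q₀²) ≤ dim (N₀/(N₀² + [N₁,N₁]))` and
`dim Q₀² ≤ dim (N₁/[N₁,N₀])`. -/
theorem complement_dimension_bounds
    {L : Type} [AddCommGroup L] [Module ℂ L] [FiniteDimensional ℂ L] (S : SuperAlg L)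
    (hsolv : S.IsSolvable)
    (N : Submodule ℂ L) (hN : S.IsNilradical N) (hsq : S.sq ≤ N)
    (Q : Submodule ℂ L) (hQe : Q ≤ S.even) (hQ1 : Q ⊓ N = ⊥) (hQ2 : Q ⊔ N = ⊤)
    (Q2 : Submodule ℂ L)
    (hQ2 : ∀ z : L, z ∈ Q2 ↔ z ∈ Q ∧
      ∃ k : ℕ, ∀ x ∈ N ⊓ S.even, ((S.ad z) ^ k) x ∈
        S.bk (N ⊓ S.even) (N ⊓ S.even) ⊔ S.bk (N ⊓ S.odd) (N ⊓ S.odd)) :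
    Module.finrank ℂ (↥Q ⧸ Submodule.comap Q.subtype Q2) ≤
      Module.finrank ℂ (↥(N ⊓ S.even) ⧸ Submodule.comap (N ⊓ S.even).subtype
        (S.bk (N ⊓ S.even) (N ⊓ S.even) ⊔ S.bk (N ⊓ S.odd) (N ⊓ S.odd))) ∧
    Module.finrank ℂ ↥Q2 ≤
      Module.finrank ℂ (↥(N ⊓ S.odd) ⧸ Submodule.comap (N ⊓ S.odd).subtype
        (S.bk (N ⊓ S.odd) (N ⊓ S.even))) := by
  obtain ⟨⟨hgr, -, s, hs⟩, hmax⟩ := hN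
  have hbr : ∀ x y, S.bracket x y ∈ N := fun x y =>
    hsq (S.bracket_mem_bk Submodule.mem_top Submodule.mem_top)
  have hD0 : ∀ z ∈ S.even, ∀ x ∈ N ⊓ S.even, S.ad z x ∈ N ⊓ S.even :=
    fun z hz x hx => ⟨hbr x z, S.bk_ee _ hx.2 _ hz⟩
  have hD1 : ∀ z ∈ S.even, ∀ x ∈ N ⊓ S.odd, S.ad z x ∈ N ⊓ S.odd :=
    fun z hz x hx => ⟨hbr x z, S.bk_oe _ hx.2 _ hz⟩
  have hQ2Q : Q2 ≤ Q := fun z hz => ((hQ2 z).1 hz).1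
  constructor
  · refine finrank_quotient_le_subquotient (S.bracket.flip ∘ₗ Q.subtype) _ _
      (fun z => hD0 z (hQe z.2)) (fun z => S.ad_mem_sup
        (S.ad_mem_bk (hQe z.2) (hD0 z (hQe z.2)) (hD0 z (hQe z.2)))
        (S.ad_mem_bk (hQe z.2) (hD1 z (hQe z.2)) (hD1 z (hQe z.2)))) ?_ _ ?_
    · intro z w x hx
      have := S.ad_commutator (w := (w : L)) (hQe z.2) x
      refine Submodule.mem_sup_left ?_
      change S.ad z (S.ad w x) - S.ad w (S.ad z x) ∈ _
      rw [this]
      exact S.bracket_mem_bk hx ⟨hbr _ _, S.bk_ee _ (hQe w.2) _ (hQe z.2)⟩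
    · intro z hz
      exact (hQ2 z).2 ⟨z.2, hz⟩
  · have hQ2e : Q2 ≤ S.even := hQ2Q.trans hQe
    rw [← (Submodule.quotEquivOfEqBot (⊥ : Submodule ℂ Q2) rfl).finrank_eq]
    refine finrank_quotient_le_subquotient (S.bracket.flip ∘ₗ Q2.subtype) _ _
      (fun z => hD1 z (hQ2e z.2))
      (fun z => S.ad_mem_bk (hQ2e z.2) (hD1 z (hQ2e z.2)) (hD0 z (hQ2e z.2))) ?_ _ ?_
    · intro z w x hx
      have := S.ad_commutator (w := (w : L)) (hQ2e z.2) x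
      change S.ad z (S.ad w x) - S.ad w (S.ad z x) ∈ _
      rw [this]
      exact S.bracket_mem_bk hx ⟨hbr _ _, S.bk_ee _ (hQ2e w.2) _ (hQ2e z.2)⟩
    -- An element of `Q2` that is also nilpotent on the odd quotient lies in `N`, hence is zero.
    · rintro ⟨z, hz⟩ ⟨k1, hk1⟩
      obtain ⟨hzQ, k0, hk0⟩ := (hQ2 z).1 hz
      have hze := hQe hzQ
      have hstab : ∀ (n : ℕ), ∀ x ∈ S.bk N N, ((S.ad z) ^ n) x ∈ S.bk N N := by
        intro n
        induction n with
        | zero => exact fun x hx => hx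
        | succ n ih =>
          intro x hx
          rw [pow_succ, Module.End.mul_apply]
          exact ih _ (S.ad_mem_bk hze (fun x _ => hbr x z) (fun x _ => hbr x z) x hx)
      have hk : ∀ x ∈ N, ((S.ad z) ^ (k0 + k1)) x ∈ S.bk N N := by
        intro x hx
        obtain ⟨a, ha, b, hb, rfl⟩ := hgr.exists_add hx
        rw [map_add]
        refine add_mem ?_ ?_
        · rw [add_comm, pow_add, Module.End.mul_apply]
          exact hstab _ _ (sup_le (S.bk_mono inf_le_left inf_le_left)
            (S.bk_mono inf_le_left inf_le_left) (hk0 a ha))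
        · rw [pow_add, Module.End.mul_apply]
          exact hstab _ _ (S.bk_mono inf_le_left inf_le_left (hk1 b hb))
      have hnil := S.ad_isNilpotent hze hgr (S.bk_le.2 fun x _ y _ => hbr x y) hs
        (fun x => hbr x z) hk
      have hzA : z ∈ N ⊔ Submodule.span ℂ {z} :=
        Submodule.mem_sup_right (Submodule.mem_span_singleton_self z)
      have hzN : z ∈ N := by
        refine hmax (N ⊔ Submodule.span ℂ {z}) ?_ ?_
          (S.lcsIn_sup_span_eq_bot hze hsq hs hnil) hzA
        · refine le_antisymm (sup_le inf_le_left inf_le_left) (sup_le ?_ ?_)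
          · conv_lhs => rw [← hgr]
            exact sup_le_sup (inf_le_inf_right _ le_sup_left) (inf_le_inf_right _ le_sup_left)
          · rw [Submodule.span_singleton_le_iff_mem]
            exact Submodule.mem_sup_left ⟨hzA, hze⟩
        · exact S.bk_le.2 fun x _ y _ => Submodule.mem_sup_left (hbr x y)
      have hz0 : z ∈ Q ⊓ N := ⟨hzQ, hzN⟩
      rw [hQ1, Submodule.mem_bot] at hz0
      exact (Submodule.mem_bot ℂ).2 (Subtype.ext hz0)
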